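/- Let L be an ideal lattice. Then the prime spectrum Spec L is a spectral space: it is T0, quasi-compact, its quasi-compact open subsets are closed under finite intersections and form a basis of the topology, and every non-empty irreducible closed subset has a generic point. -/

import Mathlib

open CompleteLattice TopologicalSpace

/-- An ideal lattice: a complete, compactly generated lattice with an associative
multiplication distributing over finite suprema, for which `⊤` is a compact
two-sided identity and products of compact elements are compact. -/
structure IsIdealLattice (α : Type*) [CompleteLattice α] [Mul α] : Prop where
  mul_assoc : ∀ a b c : α, a * b * c = a * (b * c)
  compactlyGenerated : ∀ a : α, a = sSup {b : α | b ≤ a ∧ IsCompactElement b}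
  mul_sup : ∀ a b c : α, a * (b ⊔ c) = a * b ⊔ a * c
  sup_mul : ∀ a b c : α, (a ⊔ b) * c = a * c ⊔ b * c
  top_compact : IsCompactElement (⊤ : α)
  top_mul : ∀ a : α, ⊤ * a = a
  mul_top : ∀ a : α, a * ⊤ = a
  compact_mul : ∀ a b : α, IsCompactElement a → IsCompactElement b → IsCompactElement (a * b)

/-- A prime element of an ideal lattice: `p ≠ ⊤` and `a * b ≤ p` implies `a ≤ p` or `b ≤ p`. -/
def IsPrimeElt {α : Type*} [CompleteLattice α] [Mul α] (p : α) : Prop :=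
  p ≠ ⊤ ∧ ∀ a b : α, a * b ≤ p → a ≤ p ∨ b ≤ p

/-- A semi-prime element of an ideal lattice: `b * b ≤ a` implies `b ≤ a`. -/
def IsSemiprimeElt {α : Type*} [CompleteLattice α] [Mul α] (a : α) : Prop :=
  ∀ b : α, b * b ≤ a → b ≤ a

/-- The prime spectrum of an ideal lattice: the set of prime elements. -/
def SpecL (α : Type*) [CompleteLattice α] [Mul α] : Type _ := {p : α // IsPrimeElt p}

/-- The Zariski-closed set `V(a) = {p ∈ Spec L : a ≤ p}`. -/
def zV {α : Type*} [CompleteLattice α] [Mul α] (a : α) : Set (SpecL α) := {p | a ≤ p.1}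

/-- The Zariski-open set `D(a) = {p ∈ Spec L : a ≰ p}`. -/
def zD {α : Type*} [CompleteLattice α] [Mul α] (a : α) : Set (SpecL α) := {p | ¬ a ≤ p.1}

/-- The Zariski topology on `SpecL α`: the open sets are exactly the sets `zD a`. -/
instance {α : Type*} [CompleteLattice α] [Mul α] : TopologicalSpace (SpecL α) :=
  TopologicalSpace.generateFrom {U : Set (SpecL α) | ∃ a : α, U = zD a}

/-!
If `a` is compact and `zD a ⊆ zD b`, then already `zD a ⊆ zD c` for some compact `c ≤ b`: otherwise
the compact `c` with `zD a ⊆ zD c`, which are closed under multiplication, all fail to lie below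
`b`, and by Krull's argument an element maximal above `b` with this property is a prime in `zD a`
but not in `zD b`. Taking for `b` the supremum of the elements defining an open cover of `zD a`, the
compactness of `c` yields a finite subcover. The compact opens `zD a`, with `a` compact, thus form a
basis, closed under intersections since `zD a ∩ zD b = zD (a * b)`. The generic point of an
irreducible closed set is the infimum of its points.
-/

section Mul

variable {α : Type*} [Mul α]

lemma mulLeftMono_of_mul_sup [SemilatticeSup α]
    (mul_sup : ∀ a b c : α, a * (b ⊔ c) = a * b ⊔ a * c) : MulLeftMono α where
  elim a _ _ hbc := Monotone.of_map_sup (mul_sup a) hbc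

lemma mulRightMono_of_sup_mul [SemilatticeSup α]
    (sup_mul : ∀ a b c : α, (a ⊔ b) * c = a * c ⊔ b * c) : MulRightMono α where
  elim c _ _ hab := Monotone.of_map_sup (f := (· * c)) (sup_mul · · c) hab

lemma sup_mul_sup_le [Lattice α]
    (mul_sup : ∀ a b c : α, a * (b ⊔ c) = a * b ⊔ a * c)
    (sup_mul : ∀ a b c : α, (a ⊔ b) * c = a * c ⊔ b * c)
    (mul_le_inf : ∀ a b : α, a * b ≤ a ⊓ b) (p x y : α) :
    (p ⊔ x) * (p ⊔ y) ≤ p ⊔ x * y := by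
  rw [sup_mul, mul_sup x]
  exact sup_le ((mul_le_inf _ _).trans (inf_le_left.trans le_sup_left))
    (sup_le_sup_right ((mul_le_inf _ _).trans inf_le_right) _)

end Mul

section Krull

variable {α : Type*} [CompleteLattice α]

lemma exists_le_maximal_forall_not_le {S : Set α} (hcompact : ∀ c ∈ S, IsCompactElement c)
    {b : α} (hb : ∀ c ∈ S, ¬ c ≤ b) : ∃ p, b ≤ p ∧ Maximal (fun x => ∀ c ∈ S, ¬ c ≤ x) p := by
  refine zorn_le_nonempty₀ {x : α | ∀ c ∈ S, ¬ c ≤ x} (fun C hC hchain y hy => ?_) b hb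
  refine ⟨sSup C, fun c hc hle => ?_, fun _ => le_sSup⟩
  obtain ⟨x, hx, hcx⟩ :=
    hcompact c hc C (sSup C) ⟨y, hy⟩ hchain.directedOn (_root_.isLUB_sSup C) hle
  exact hC hx c hc hcx

lemma isPrimeElt_of_maximal_forall_not_le [Mul α]
    (mul_sup : ∀ a b c : α, a * (b ⊔ c) = a * b ⊔ a * c)
    (sup_mul : ∀ a b c : α, (a ⊔ b) * c = a * c ⊔ b * c)
    (mul_le_inf : ∀ a b : α, a * b ≤ a ⊓ b)
    {S : Set α} (hne : S.Nonempty) (hmul : ∀ c ∈ S, ∀ d ∈ S, c * d ∈ S)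
    {p : α} (hp : Maximal (fun x => ∀ c ∈ S, ¬ c ≤ x) p) : IsPrimeElt p := by
  have := mulLeftMono_of_mul_sup mul_sup
  have := mulRightMono_of_sup_mul sup_mul
  have exists_le_sup : ∀ x, ¬ x ≤ p → ∃ c ∈ S, c ≤ p ⊔ x := by
    intro x hx
    by_contra! h
    exact hx (le_sup_right.trans (hp.le_of_ge h le_sup_left))
  refine ⟨?_, fun x y hxy => ?_⟩
  · rintro rfl
    obtain ⟨c, hc⟩ := hne
    exact hp.prop c hc le_top
  · by_contra! hcon
    obtain ⟨c, hc, hcx⟩ := exists_le_sup x hcon.1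
    obtain ⟨d, hd, hdy⟩ := exists_le_sup y hcon.2
    refine hp.prop (c * d) (hmul c hc d hd) ?_
    calc c * d ≤ (p ⊔ x) * (p ⊔ y) := mul_le_mul' hcx hdy
      _ ≤ p ⊔ x * y := sup_mul_sup_le mul_sup sup_mul mul_le_inf p x y
      _ = p := sup_eq_left.2 hxy

end Krull

namespace SpecL

variable {α : Type*} [CompleteLattice α] [Mul α]

lemma zD_mono : Monotone (zD : α → Set (SpecL α)) :=
  fun _ _ hab _ hap hbp => hap (hab.trans hbp)

lemma zD_top : zD (⊤ : α) = Set.univ :=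
  Set.eq_univ_of_forall fun p htop => p.2.1 (top_le_iff.1 htop)

lemma zD_iSup {ι : Sort*} (a : ι → α) : zD (⨆ i, a i) = ⋃ i, zD (a i) := by
  ext p
  simp only [zD, iSup_le_iff, not_forall, Set.mem_ofPred_eq, Set.mem_iUnion]

lemma zD_mul (mul_le_inf : ∀ a b : α, a * b ≤ a ⊓ b) (a b : α) :
    zD (a * b) = zD a ∩ zD b := by
  refine Set.Subset.antisymm (Set.subset_inter (zD_mono ?_) (zD_mono ?_)) fun p hp hab => ?_
  · exact (mul_le_inf a b).trans inf_le_left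
  · exact (mul_le_inf a b).trans inf_le_right
  · exact (p.2.2 a b hab).elim hp.1 hp.2

lemma compl_zV (a : α) : (zV a)ᶜ = zD a := rfl

lemma isOpen_zD (a : α) : IsOpen (zD a) :=
  isOpen_generateFrom_of_mem ⟨a, rfl⟩

lemma isClosed_zV (a : α) : IsClosed (zV a) :=
  ⟨isOpen_zD a⟩

lemma isOpen_iff (mul_le_inf : ∀ a b : α, a * b ≤ a ⊓ b) {U : Set (SpecL α)} :
    IsOpen U ↔ ∃ a : α, U = zD a := by
  refine ⟨fun hU => ?_, fun ⟨a, ha⟩ => ha ▸ isOpen_zD a⟩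
  induction hU with
  | basic _ hU => exact hU
  | univ => exact ⟨⊤, zD_top.symm⟩
  | inter U V _ _ hU hV =>
    obtain ⟨a, rfl⟩ := hU
    obtain ⟨b, rfl⟩ := hV
    exact ⟨a * b, (zD_mul mul_le_inf a b).symm⟩
  | sUnion C _ hC =>
    choose! a ha using hC
    refine ⟨⨆ U ∈ C, a U, ?_⟩
    simp only [zD_iSup, Set.sUnion_eq_biUnion]
    exact Set.iUnion₂_congr ha

lemma isClosed_iff (mul_le_inf : ∀ a b : α, a * b ≤ a ⊓ b) {S : Set (SpecL α)} :
    IsClosed S ↔ ∃ a : α, S = zV a := by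
  simp only [← isOpen_compl_iff, isOpen_iff mul_le_inf, ← compl_zV, compl_inj_iff]

lemma specializes_iff {p q : SpecL α} : p ⤳ q ↔ p.1 ≤ q.1 := by
  refine ⟨fun h => ?_, fun h => ?_⟩
  · by_contra hpq
    exact h.mem_open (isOpen_zD p.1) hpq le_rfl
  · rw [Specializes, nhds_generateFrom, nhds_generateFrom]
    refine biInf_mono ?_
    rintro _ ⟨hq, a, rfl⟩
    exact ⟨fun hap => hq (hap.trans h), a, rfl⟩

lemma closure_singleton (p : SpecL α) : closure {p} = zV p.1 :=
  Set.ext fun _ => specializes_iff_mem_closure.symm.trans specializes_iff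

instance : T0Space (SpecL α) where
  t0 _ _ h := Subtype.ext
    (le_antisymm (specializes_iff.1 h.specializes) (specializes_iff.1 h.symm.specializes))

lemma subset_zV_iff {S : Set (SpecL α)} {a : α} : S ⊆ zV a ↔ a ≤ ⨅ p ∈ S, p.1 :=
  le_iInf₂_iff.symm

lemma isPrimeElt_iInf {S : Set (SpecL α)} (hS : IsIrreducible S) :
    IsPrimeElt (⨅ p ∈ S, p.1) := by
  refine ⟨fun htop => ?_, fun a b hab => ?_⟩
  · obtain ⟨p, hp⟩ := hS.nonempty
    exact p.2.1 (top_le_iff.1 (subset_zV_iff.2 htop.ge hp))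
  · rw [← subset_zV_iff, ← subset_zV_iff]
    exact isPreirreducible_iff_isClosed_union_isClosed.1 hS.isPreirreducible _ _
      (isClosed_zV a) (isClosed_zV b) fun p hp => p.2.2 a b (subset_zV_iff.2 hab hp)

lemma zV_iInf_of_isClosed (mul_le_inf : ∀ a b : α, a * b ≤ a ⊓ b) {S : Set (SpecL α)}
    (hS : IsClosed S) : zV (⨅ p ∈ S, p.1) = S := by
  refine Set.Subset.antisymm (fun q hq => ?_) (subset_zV_iff.2 le_rfl)
  obtain ⟨a, rfl⟩ := (isClosed_iff mul_le_inf).1 hS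
  exact (subset_zV_iff.1 Set.Subset.rfl).trans hq

lemma quasiSober (mul_le_inf : ∀ a b : α, a * b ≤ a ⊓ b) : QuasiSober (SpecL α) where
  sober hS hclosed :=
    ⟨⟨_, isPrimeElt_iInf hS⟩,
      (closure_singleton _).trans (zV_iInf_of_isClosed mul_le_inf hclosed)⟩

lemma isTopologicalBasis_zD_compact [IsCompactlyGenerated α]
    (mul_le_inf : ∀ a b : α, a * b ≤ a ⊓ b) :
    IsTopologicalBasis (Set.range fun c : {c : α // IsCompactElement c} => zD c.1) := by
  refine isTopologicalBasis_of_isOpen_of_nhds ?_ fun p U hp hU => ?_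
  · rintro _ ⟨c, rfl⟩
    exact isOpen_zD c.1
  · obtain ⟨a, rfl⟩ := (isOpen_iff mul_le_inf).1 hU
    obtain ⟨c, hc, hca, hcp⟩ : ∃ c, IsCompactElement c ∧ c ≤ a ∧ ¬ c ≤ p.1 := by
      by_contra! h
      exact hp (le_iff_compact_le_imp.2 h)
    exact ⟨zD c, ⟨⟨c, hc⟩, rfl⟩, hcp, zD_mono hca⟩

lemma exists_isCompactElement_le_zD_subset
    (mul_sup : ∀ a b c : α, a * (b ⊔ c) = a * b ⊔ a * c)
    (sup_mul : ∀ a b c : α, (a ⊔ b) * c = a * c ⊔ b * c)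
    (mul_le_inf : ∀ a b : α, a * b ≤ a ⊓ b)
    (compact_mul : ∀ a b : α, IsCompactElement a → IsCompactElement b → IsCompactElement (a * b))
    {a b : α} (ha : IsCompactElement a) (hab : zD a ⊆ zD b) :
    ∃ c ≤ b, IsCompactElement c ∧ zD a ⊆ zD c := by
  let S : Set α := {c | IsCompactElement c ∧ zD a ⊆ zD c}
  have haS : a ∈ S := ⟨ha, Set.Subset.rfl⟩
  have hmul : ∀ c ∈ S, ∀ d ∈ S, c * d ∈ S := fun c hc d hd =>
    ⟨compact_mul c d hc.1 hd.1, zD_mul mul_le_inf c d ▸ Set.subset_inter hc.2 hd.2⟩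
  by_contra! hcon
  obtain ⟨p, hbp, hp⟩ := exists_le_maximal_forall_not_le (S := S) (b := b)
    (fun _ hc => hc.1) fun c hc hcb => hcon c hcb hc.1 hc.2
  have hprime : IsPrimeElt p :=
    isPrimeElt_of_maximal_forall_not_le mul_sup sup_mul mul_le_inf ⟨a, haS⟩ hmul hp
  exact hab (a := ⟨p, hprime⟩) (hp.prop a haS) hbp

lemma isCompact_zD
    (mul_sup : ∀ a b c : α, a * (b ⊔ c) = a * b ⊔ a * c)
    (sup_mul : ∀ a b c : α, (a ⊔ b) * c = a * c ⊔ b * c)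
    (mul_le_inf : ∀ a b : α, a * b ≤ a ⊓ b)
    (compact_mul : ∀ a b : α, IsCompactElement a → IsCompactElement b → IsCompactElement (a * b))
    {a : α} (ha : IsCompactElement a) : IsCompact (zD a) := by
  refine isCompact_of_finite_subcover fun U hU hcover => ?_
  choose b hb using fun i => (isOpen_iff mul_le_inf).1 (hU i)
  obtain rfl : U = fun i => zD (b i) := funext hb
  obtain ⟨c, hcb, hc, hac⟩ := exists_isCompactElement_le_zD_subset
    mul_sup sup_mul mul_le_inf compact_mul ha (hcover.trans_eq (zD_iSup b).symm)
  obtain ⟨t, hct⟩ := IsCompactElement.exists_finset_of_le_iSup α hc b hcb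
  refine ⟨t, ?_⟩
  calc zD a ⊆ zD c := hac
    _ ⊆ zD (⨆ i ∈ t, b i) := zD_mono hct
    _ = ⋃ i ∈ t, zD (b i) := by simp only [zD_iSup]

end SpecL

theorem specL_spectral_general {α : Type*} [CompleteLattice α] [IsCompactlyGenerated α] [Mul α]
    (mul_sup : ∀ a b c : α, a * (b ⊔ c) = a * b ⊔ a * c)
    (sup_mul : ∀ a b c : α, (a ⊔ b) * c = a * c ⊔ b * c)
    (mul_le_inf : ∀ a b : α, a * b ≤ a ⊓ b)
    (top_compact : IsCompactElement (⊤ : α))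
    (compact_mul : ∀ a b : α, IsCompactElement a → IsCompactElement b → IsCompactElement (a * b)) :
    SpectralSpace (SpecL α) := by
  have isCompact_zD {a : α} (ha : IsCompactElement a) : IsCompact (zD a) :=
    SpecL.isCompact_zD mul_sup sup_mul mul_le_inf compact_mul ha
  have basis := SpecL.isTopologicalBasis_zD_compact mul_le_inf
  have : CompactSpace (SpecL α) := ⟨SpecL.zD_top (α := α) ▸ isCompact_zD top_compact⟩
  have : QuasiSober (SpecL α) := SpecL.quasiSober mul_le_inf
  have : QuasiSeparatedSpace (SpecL α) := .of_isTopologicalBasis basis fun a b =>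
    SpecL.zD_mul mul_le_inf a.1 b.1 ▸ isCompact_zD (compact_mul _ _ a.2 b.2)
  have : PrespectralSpace (SpecL α) := .of_isTopologicalBasis' basis fun a => isCompact_zD a.2
  constructor

namespace IsIdealLattice

variable {α : Type*} [CompleteLattice α] [Mul α]

lemma isCompactlyGenerated (hL : IsIdealLattice α) : IsCompactlyGenerated α where
  exists_sSup_eq a := ⟨_, fun _ hb => hb.2, (hL.compactlyGenerated a).symm⟩

lemma mul_le_inf (hL : IsIdealLattice α) (a b : α) : a * b ≤ a ⊓ b := by
  have := mulLeftMono_of_mul_sup hL.mul_sup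
  have := mulRightMono_of_sup_mul hL.sup_mul
  exact le_inf ((mul_le_mul_right le_top a).trans_eq (hL.mul_top a))
    ((mul_le_mul_left le_top b).trans_eq (hL.top_mul b))

end IsIdealLattice

/-- The prime spectrum `Spec L` of an ideal lattice is a spectral space: it is T0 and
quasi-compact, its quasi-compact open subsets are closed under finite intersections and
form a basis of the topology, and every non-empty irreducible closed subset has a
generic point. -/
theorem specL_spectral {α : Type*} [CompleteLattice α] [Mul α]
    (hL : IsIdealLattice α) :
    T0Space (SpecL α) ∧
    CompactSpace (SpecL α) ∧
    (∀ U V : Set (SpecL α), IsOpen U → IsCompact U → IsOpen V → IsCompact V →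
      IsCompact (U ∩ V)) ∧
    TopologicalSpace.IsTopologicalBasis {U : Set (SpecL α) | IsOpen U ∧ IsCompact U} ∧
    QuasiSober (SpecL α) := by
  have := hL.isCompactlyGenerated
  have := specL_spectral_general hL.mul_sup hL.sup_mul hL.mul_le_inf hL.top_compact hL.compact_mul
  exact ⟨inferInstance, inferInstance, QuasiSeparatedSpace.inter_isCompact,
    PrespectralSpace.isTopologicalBasis, inferInstance⟩
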